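/- Optimality of the ℓ₁-norm √2 for single-qubit stabilizer decompositions of the magic state (robustness of magic of |A⟩ equals √2): let S₁,…,S₆ be the outer-product projectors |+⟩⟨+|, |−⟩⟨−|, |+i⟩⟨+i|, |−i⟩⟨−i|, |0⟩⟨0|, |1⟩⟨1| onto the six single-qubit pure stabilizer states, where |±⟩ = (e₀±e₁)/√2 and |±i⟩ = (e₀ ± i e₁)/√2. Then for every α : Fin 6 → ℝ with Σᵢ αᵢ Sᵢ = |A⟩⟨A|, one has Σᵢ |αᵢ| ≥ √2. -/

import Mathlib

open Matrix

noncomputable section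

/-- Outer product `|v⟩⟨v| = v v†` of a vector of `ℂ²`. -/
def outer (v : Fin 2 → ℂ) : Matrix (Fin 2) (Fin 2) ℂ := fun i j => v i * star (v j)

/-- The magic state `|A⟩ = (e₀ + e^{iπ/4} e₁)/√2`. -/
def magicA : Fin 2 → ℂ :=
  (((Real.sqrt 2 : ℝ) : ℂ))⁻¹ • ![1, Complex.exp (Complex.I * Real.pi / 4)]

/-- The six single-qubit pure stabilizer states
`|+⟩, |−⟩, |+i⟩, |−i⟩, |0⟩, |1⟩` (eigenstates of the Pauli matrices `X, Y, Z`). -/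
def stabState : Fin 6 → (Fin 2 → ℂ) :=
  ![(((Real.sqrt 2 : ℝ) : ℂ))⁻¹ • ![1, 1],
    (((Real.sqrt 2 : ℝ) : ℂ))⁻¹ • ![1, -1],
    (((Real.sqrt 2 : ℝ) : ℂ))⁻¹ • ![1, Complex.I],
    (((Real.sqrt 2 : ℝ) : ℂ))⁻¹ • ![1, -Complex.I],
    ![1, 0],
    ![0, 1]]

/-!
Linear programming duality: a real functional bounded by `1` in absolute value on the six
stabilizer projectors bounds the `ℓ₁`-norm of a decomposition from below by its value at the target.
The witness is `M ↦ Re tr ((X + Y) M)`. On the Bloch sphere it reads off the sum of the first two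
coordinates, so it is `±1` at the eigenstates of `X` and `Y` and `0` at those of `Z`, while at
`|A⟩`, whose Bloch vector is `(1, 1, 0) / √2`, it is `√2`.
-/

theorem map_sum_smul_le_sum_abs {ι R E : Type*} [CommRing R] [LinearOrder R]
    [IsStrictOrderedRing R] [AddCommGroup E] [Module R E] (f : E →ₗ[R] R) {s : Finset ι}
    {S : ι → E} (hS : ∀ i ∈ s, |f (S i)| ≤ 1) (α : ι → R) :
    f (∑ i ∈ s, α i • S i) ≤ ∑ i ∈ s, |α i| := by
  rw [map_sum]
  refine Finset.sum_le_sum fun i hi => ?_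
  calc f (α i • S i) ≤ |α i * f (S i)| := by
        rw [map_smul, smul_eq_mul]
        exact le_abs_self _
    _ = |α i| * |f (S i)| := abs_mul _ _
    _ ≤ |α i| := mul_le_of_le_one_right (abs_nonneg _) (hS i hi)

section Expectation

variable {n : Type*} [Fintype n]

/-- The real part of the expectation value `tr (W M)` of an observable `W` in a state with density
matrix `M`, as a real-linear functional of `M`. Neither matrix is required to be Hermitian. -/
def expectation (W : Matrix n n ℂ) : Matrix n n ℂ →ₗ[ℝ] ℝ :=
  Complex.reLm ∘ₗ Matrix.traceLinearMap n ℝ ℂ ∘ₗ LinearMap.mulLeft ℝ W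

theorem expectation_apply (W M : Matrix n n ℂ) :
    expectation W M = (W * M).trace.re :=
  rfl

theorem expectation_add (V W M : Matrix n n ℂ) :
    expectation (V + W) M = expectation V M + expectation W M := by
  simp only [expectation_apply, add_mul, Matrix.trace_add, Complex.add_re]

end Expectation

/-- The Pauli matrix `X`, with eigenstates `|±⟩`. -/
def pauliX : Matrix (Fin 2) (Fin 2) ℂ := !![0, 1; 1, 0]

/-- The Pauli matrix `Y`, with eigenstates `|±i⟩`. -/
def pauliY : Matrix (Fin 2) (Fin 2) ℂ := !![0, -Complex.I; Complex.I, 0]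

theorem expectation_pauliX (M : Matrix (Fin 2) (Fin 2) ℂ) :
    expectation pauliX M = (M 1 0).re + (M 0 1).re := by
  rw [expectation_apply, Matrix.trace_fin_two, Matrix.mul_apply, Matrix.mul_apply]
  simp [pauliX]

theorem expectation_pauliY (M : Matrix (Fin 2) (Fin 2) ℂ) :
    expectation pauliY M = (M 1 0).im - (M 0 1).im := by
  rw [expectation_apply, Matrix.trace_fin_two, Matrix.mul_apply, Matrix.mul_apply]
  simp [pauliY, sub_eq_add_neg]

theorem star_outer_apply (v : Fin 2 → ℂ) (i j : Fin 2) : star (outer v i j) = outer v j i := by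
  simp only [outer, star_mul', star_star, mul_comm]

theorem expectation_pauliX_add_pauliY_outer (v : Fin 2 → ℂ) :
    expectation (pauliX + pauliY) (outer v) =
      2 * ((outer v 1 0).re + (outer v 1 0).im) := by
  rw [expectation_add, expectation_pauliX, expectation_pauliY, ← star_outer_apply v 1 0,
    Complex.star_def, Complex.conj_re, Complex.conj_im]
  ring

theorem outer_inv_sqrt_two_smul_apply_one_zero (w : ℂ) :
    outer (((Real.sqrt 2 : ℝ) : ℂ)⁻¹ • ![1, w]) 1 0 = ((2⁻¹ : ℝ) : ℂ) * w := by
  have inv_sqrt_two_mul_self : (Real.sqrt 2)⁻¹ * (Real.sqrt 2)⁻¹ = 2⁻¹ := by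
    rw [← mul_inv, Real.mul_self_sqrt zero_le_two]
  rw [← inv_sqrt_two_mul_self]
  simp only [outer, Pi.smul_apply, Matrix.cons_val_zero, Matrix.cons_val_one, smul_eq_mul,
    mul_one, star_inv₀, Complex.star_def, Complex.conj_ofReal, Complex.ofReal_mul,
    Complex.ofReal_inv]
  ring

theorem expectation_pauliX_add_pauliY_outer_inv_sqrt_two_smul (w : ℂ) :
    expectation (pauliX + pauliY) (outer (((Real.sqrt 2 : ℝ) : ℂ)⁻¹ • ![1, w])) =
      w.re + w.im := by
  rw [expectation_pauliX_add_pauliY_outer, outer_inv_sqrt_two_smul_apply_one_zero,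
    Complex.re_ofReal_mul, Complex.im_ofReal_mul]
  ring

theorem expectation_pauliX_add_pauliY_outer_stabState :
    ∀ i, expectation (pauliX + pauliY) (outer (stabState i)) = ![1, -1, 1, -1, 0, 0] i
  | 0 => (expectation_pauliX_add_pauliY_outer_inv_sqrt_two_smul 1).trans (by simp)
  | 1 => (expectation_pauliX_add_pauliY_outer_inv_sqrt_two_smul (-1)).trans (by simp)
  | 2 => (expectation_pauliX_add_pauliY_outer_inv_sqrt_two_smul Complex.I).trans (by simp)
  | 3 => (expectation_pauliX_add_pauliY_outer_inv_sqrt_two_smul (-Complex.I)).trans (by simp)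
  | 4 => (expectation_pauliX_add_pauliY_outer ![1, 0]).trans (by simp [outer])
  | 5 => (expectation_pauliX_add_pauliY_outer ![0, 1]).trans (by simp [outer])

theorem abs_expectation_pauliX_add_pauliY_outer_stabState_le_one (i : Fin 6) :
    |expectation (pauliX + pauliY) (outer (stabState i))| ≤ 1 := by
  rw [expectation_pauliX_add_pauliY_outer_stabState]
  fin_cases i <;> simp

theorem expectation_pauliX_add_pauliY_outer_magicA :
    expectation (pauliX + pauliY) (outer magicA) = Real.sqrt 2 := by
  have I_mul_pi_div_four_eq : Complex.I * Real.pi / 4 = ((Real.pi / 4 : ℝ) : ℂ) * Complex.I := by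
    push_cast
    ring
  rw [magicA, expectation_pauliX_add_pauliY_outer_inv_sqrt_two_smul, I_mul_pi_div_four_eq,
    Complex.exp_ofReal_mul_I_re, Complex.exp_ofReal_mul_I_im,
    Real.cos_pi_div_four, Real.sin_pi_div_four, add_halves]

/-- Optimality of the ℓ₁-norm `√2` for single-qubit stabilizer decompositions of the
magic state (robustness of magic of `|A⟩` equals `√2`): every real decomposition
`Σᵢ αᵢ |Sᵢ⟩⟨Sᵢ| = |A⟩⟨A|` over the six pure stabilizer projectors satisfies
`Σᵢ |αᵢ| ≥ √2`. -/
theorem magic_state_robustness_lower_bound (α : Fin 6 → ℝ)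
    (hdecomp : (∑ i, ((α i : ℝ) : ℂ) • outer (stabState i)) = outer magicA) :
    ∑ i, |α i| ≥ Real.sqrt 2 := by
  calc Real.sqrt 2 = expectation (pauliX + pauliY) (outer magicA) :=
        expectation_pauliX_add_pauliY_outer_magicA.symm
    _ = expectation (pauliX + pauliY) (∑ i, α i • outer (stabState i)) := by
        simp only [← hdecomp, Complex.coe_smul]
    _ ≤ ∑ i, |α i| :=
        map_sum_smul_le_sum_abs _
          (fun i _ => abs_expectation_pauliX_add_pauliY_outer_stabState_le_one i) α

end
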